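/- arXiv:2602.14325 — 2 statements merged into one kernel-verified Lean document; each statement's English description precedes it below -/
import Mathlib

section
/- (The 2-block rule) In the Lengyel transfer game L(b;x₁,y₁;x₂,y₂), suppose x₂ ≤ x₁. Then every column whose index is congruent to one of 0, 1, …, x₁−1 modulo x₁+x₂ is not a 2-column: for every x with x mod (x₁+x₂) < x₁ and every y ∈ ℕ, SG(x,y) ∈ {0,1}. -/
/-- The minimum excludant of a set of naturals: the least natural number not in the set. -/
noncomputable def mex (S : Set ℕ) : ℕ := sInf {n : ℕ | n ∉ S}

/-- `SG` is the Sprague–Grundy function of the Lengyel transfer game `L(b; x₁,y₁; x₂,y₂)`: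
from `(x,y)` one may move to `(x, y−b)` (when `y ≥ b`), to `(x−x₁, y+y₁)` (when `x ≥ x₁`),
or to `(x−x₂, y+y₂)` (when `x ≥ x₂`), and `SG` satisfies the mex recurrence. -/
def IsLengyelSG (b x1 y1 x2 y2 : ℕ) (SG : ℕ → ℕ → ℕ) : Prop :=
  ∀ x y : ℕ, SG x y = mex
    ((if b ≤ y then ({SG x (y - b)} : Set ℕ) else ∅) ∪
     (if x1 ≤ x then ({SG (x - x1) (y + y1)} : Set ℕ) else ∅) ∪
     (if x2 ≤ x then ({SG (x - x2) (y + y2)} : Set ℕ) else ∅))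

theorem mex_notMem (S : Set ℕ) (h : ∃ n, n ∉ S) : mex S ∉ S :=
  Nat.sInf_mem (s := {n : ℕ | n ∉ S}) h

theorem mem_of_lt_mex (S : Set ℕ) (n : ℕ) (h : n < mex S) : n ∈ S := by
  by_contra hn
  exact Nat.notMem_of_lt_sInf h hn

/-- The options of a position, as a predicate on values. -/
def IsOpt (b x1 y1 x2 y2 : ℕ) (SG : ℕ → ℕ → ℕ) (x y n : ℕ) : Prop :=
  (b ≤ y ∧ n = SG x (y - b)) ∨ (x1 ≤ x ∧ n = SG (x - x1) (y + y1)) ∨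
    (x2 ≤ x ∧ n = SG (x - x2) (y + y2))

theorem lengyel_spec {b x1 y1 x2 y2 : ℕ} {SG : ℕ → ℕ → ℕ}
    (hSG : IsLengyelSG b x1 y1 x2 y2 SG) (x y : ℕ) :
    ¬ IsOpt b x1 y1 x2 y2 SG x y (SG x y) ∧
      ∀ n, n < SG x y → IsOpt b x1 y1 x2 y2 SG x y n := by
  have key : ∀ n, n ∈ ((if b ≤ y then ({SG x (y - b)} : Set ℕ) else ∅) ∪
     (if x1 ≤ x then ({SG (x - x1) (y + y1)} : Set ℕ) else ∅) ∪
     (if x2 ≤ x then ({SG (x - x2) (y + y2)} : Set ℕ) else ∅)) ↔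
      IsOpt b x1 y1 x2 y2 SG x y n := by
    intro n
    unfold IsOpt
    split_ifs <;> simp [*] <;> tauto
  constructor
  · rw [← key]
    have h := hSG x y
    rw [h]
    apply mex_notMem
    refine ⟨SG x (y - b) + SG (x - x1) (y + y1) + SG (x - x2) (y + y2) + 1, ?_⟩
    rw [key]
    unfold IsOpt
    omega
  · intro n hn
    rw [← key]
    apply mem_of_lt_mex
    rw [← hSG x y]
    exact hn

/-- Along each column, values step by `b` inside `{0,1}` alternately, or stay at least 2. -/
theorem lengyel_step {b x1 y1 x2 y2 : ℕ} {SG : ℕ → ℕ → ℕ} (hb : 0 < b)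
    (hx1 : 0 < x1) (hx2 : 0 < x2) (hSG : IsLengyelSG b x1 y1 x2 y2 SG) :
    ∀ x y : ℕ, (SG x y ≤ 1 → SG x (y + b) = 1 - SG x y) ∧
      (2 ≤ SG x y → 2 ≤ SG x (y + b)) := by
  intro x
  induction x using Nat.strong_induction_on with
  | _ x ihx =>
  intro y
  induction y using Nat.strong_induction_on with
  | _ y ihy =>
  obtain ⟨hne, hlt⟩ := lengyel_spec hSG x y
  obtain ⟨hne', hlt'⟩ := lengyel_spec hSG x (y + b)
  have h0 := hlt 0
  have h1 := hlt 1
  have h0' := hlt' 0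
  have h1' := hlt' 1
  clear hlt hlt'
  have hp : x1 ≤ x → _ := fun h => ihx (x - x1) (by omega) (y + y1)
  have hq : x2 ≤ x → _ := fun h => ihx (x - x2) (by omega) (y + y2)
  have hs : b ≤ y → _ := fun h => ihy (y - b) (by omega)
  have hs' : b ≤ y → SG x (y - b + b) = SG x y := fun h => by
    rw [Nat.sub_add_cancel h]
  clear ihx ihy
  unfold IsOpt at *
  rw [Nat.add_sub_cancel, show y + b + y1 = y + y1 + b by omega,
    show y + b + y2 = y + y2 + b by omega] at hne' h0' h1'
  generalize SG x (y - b + b) = s1 at *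
  generalize SG x (y - b) = s0 at *
  generalize SG x (y + b) = t at *
  generalize SG x y = s at *
  generalize SG (x - x1) (y + y1 + b) = p' at *
  generalize SG (x - x1) (y + y1) = p at *
  generalize SG (x - x2) (y + y2 + b) = q' at *
  generalize SG (x - x2) (y + y2) = q at *
  by_cases c1 : x1 ≤ x <;> by_cases c2 : x2 ≤ x <;> by_cases c3 : b ≤ y <;>
    simp only [c1, c2, c3, true_and, false_and, false_or, or_false, forall_true_left,
      Nat.le_add_left, imp_false] at * <;> omega

/-- The 2-block rule: if `x₂ ≤ x₁`, then every column whose index is congruent to one of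
`0, 1, …, x₁−1` modulo `x₁+x₂` is not a 2-column: all its SG-values lie in `{0,1}`. -/
theorem two_block_rule (b x1 x2 y1 y2 : ℕ) (hb : 0 < b) (hx1 : 0 < x1) (hx2 : 0 < x2)
    (hle : x2 ≤ x1)
    (SG : ℕ → ℕ → ℕ) (hSG : IsLengyelSG b x1 y1 x2 y2 SG) :
    ∀ x y : ℕ, x % (x1 + x2) < x1 → SG x y = 0 ∨ SG x y = 1 := by
  intro x
  induction x using Nat.strong_induction_on with
  | _ x ihx =>
  intro y
  induction y using Nat.strong_induction_on with
  | _ y ihy =>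
  intro hx
  by_cases hy : b ≤ y
  · have h := lengyel_step hb hx1 hx2 hSG x (y - b)
    rw [Nat.sub_add_cancel hy] at h
    have := ihy (y - b) (by omega) hx
    omega
  obtain ⟨hne, hlt⟩ := lengyel_spec hSG x y
  have h0 := hlt 0
  have h1 := hlt 1
  unfold IsOpt at h0 h1
  by_cases hk : x < x1
  · omega
  have hge : x1 + x2 ≤ x := by
    by_contra hc
    rw [Nat.mod_eq_of_lt (by omega)] at hx
    omega
  have hv := ihx (x - (x1 + x2)) (by omega) (y + y1 + y2)
    (by rwa [← Nat.mod_eq_sub_mod hge])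
  have hp := (lengyel_spec hSG (x - x1) (y + y1)).1
  have hq := (lengyel_spec hSG (x - x2) (y + y2)).1
  unfold IsOpt at hp hq
  rw [show x - x1 - x2 = x - (x1 + x2) by omega] at hp
  rw [show x - x2 - x1 = x - (x1 + x2) by omega,
    show y + y2 + y1 = y + y1 + y2 by omega] at hq
  omega
end

section
/- Suppose x₁ = x₂ = 1, 0 ≤ y₁ < 2b, 0 ≤ y₂ < 2b, and |y₁ − y₂| = b. Then the Sprague–Grundy values of the Lengyel transfer game L(b;1,y₁;1,y₂) are given explicitly by SG(x,y) = (2 if x is odd, 0 if x is even) + (1 if y mod 2b ≥ b, 0 if y mod 2b < b). In particular, the game has horizontal period 2: SG(x+2, y) = SG(x,y) for all (x,y) ∈ ℕ×ℕ. -/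
theorem mex_eq_of {S : Set ℕ} {n : ℕ} (h1 : n ∉ S) (h2 : ∀ m < n, m ∈ S) : mex S = n := by
  unfold mex
  apply le_antisymm
  · exact Nat.sInf_le h1
  · by_contra hlt
    have hne : {k : ℕ | k ∉ S}.Nonempty := ⟨n, h1⟩
    exact Nat.sInf_mem hne (h2 _ (not_le.mp hlt))

/-- The parity of the block of length `b` containing `y`. -/
def blockPar (b y : ℕ) : ℕ := if b ≤ y % (2 * b) then 1 else 0

theorem blockPar_add (b y : ℕ) (hb : 0 < b) : blockPar b (y + b) = 1 - blockPar b y := by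
  unfold blockPar
  have hlt : y % (2 * b) < 2 * b := Nat.mod_lt _ (by omega)
  have hbm : b % (2 * b) = b := Nat.mod_eq_of_lt (by omega)
  have h := Nat.add_mod y b (2 * b)
  rw [hbm] at h
  by_cases hc : b ≤ y % (2 * b)
  · rw [Nat.mod_eq_sub_mod (by omega : y % (2 * b) + b ≥ 2 * b),
      Nat.mod_eq_of_lt (by omega : y % (2 * b) + b - 2 * b < 2 * b)] at h
    rw [if_pos hc, if_neg (by omega)]
  · rw [Nat.mod_eq_of_lt (by omega : y % (2 * b) + b < 2 * b)] at h
    rw [if_neg hc, if_pos (by omega)]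

theorem blockPar_le (b y : ℕ) : blockPar b y ≤ 1 := by
  unfold blockPar; split_ifs <;> omega

theorem blockPar_small (b y : ℕ) (h : y < b) : blockPar b y = 0 := by
  unfold blockPar
  rw [Nat.mod_eq_of_lt (by omega), if_neg (by omega)]

theorem lengyel_formula (b y1 y2 : ℕ) (hb : 0 < b)
    (hd : y1 = y2 + b ∨ y2 = y1 + b)
    (SG : ℕ → ℕ → ℕ) (hSG : IsLengyelSG b 1 y1 1 y2 SG) (x : ℕ) :
    ∀ y : ℕ, SG x y = (if Odd x then 2 else 0) + blockPar b y := by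
  induction x with
  | zero =>
    intro y
    induction y using Nat.strong_induction_on with
    | _ y ih =>
      rw [hSG]
      have hp := blockPar_le b y
      by_cases hy : b ≤ y
      · have h1 := ih (y - b) (by omega)
        have h2 := blockPar_add b (y - b) hb
        have h3 := blockPar_le b (y - b)
        rw [Nat.sub_add_cancel hy] at h2
        apply mex_eq_of <;> simp [hy, h1] <;> omega
      · have h2 := blockPar_small b y (by omega)
        apply mex_eq_of <;> simp [hy, h2]
  | succ x ihx =>
    intro y
    induction y using Nat.strong_induction_on with
    | _ y ih =>
      rw [hSG]
      have hp := blockPar_le b y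
      have hqy : ∀ z, blockPar b (z + y1) + blockPar b (z + y2) = 1 := by
        intro z
        have e1 := blockPar_le b (z + y1)
        have e2 := blockPar_le b (z + y2)
        rcases hd with h | h
        · have := blockPar_add b (z + y2) hb
          rw [h, ← add_assoc]; omega
        · have := blockPar_add b (z + y1) hb
          rw [h, ← add_assoc]; omega
      have hqyy := hqy y
      have hodd : Odd (x + 1) ↔ ¬ Odd x := Nat.odd_add_one
      by_cases hy : b ≤ y
      · have h1 := ih (y - b) (by omega)
        have h2 := blockPar_add b (y - b) hb
        have h3 := blockPar_le b (y - b)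
        rw [Nat.sub_add_cancel hy] at h2
        by_cases ho : Odd x <;> apply mex_eq_of <;>
          simp only [hy, h1, ihx, ho, hodd, if_true, if_false, Nat.add_sub_cancel, not_true,
            not_false_eq_true, Set.mem_union, Set.mem_singleton_iff, Nat.le_add_left] <;> omega
      · have h2 := blockPar_small b y (by omega)
        by_cases ho : Odd x <;> apply mex_eq_of <;>
          simp only [hy, h2, ihx, ho, hodd, if_true, if_false, Nat.add_sub_cancel, not_true,
            not_false_eq_true, Set.mem_union, Set.mem_singleton_iff, Set.mem_empty_iff_false, false_or,
            Nat.le_add_left] <;> omega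

/-- If `x₁ = x₂ = 1`, `y₁, y₂ < 2b` and `|y₁ − y₂| = b`, then the SG-values of
`L(b;1,y₁;1,y₂)` are given explicitly by
`SG(x,y) = (2 if x odd else 0) + (1 if y mod 2b ≥ b else 0)`;
in particular the horizontal period is `2`. -/
theorem trivial_case (b y1 y2 : ℕ) (hb : 0 < b)
    (hy1 : y1 < 2 * b) (hy2 : y2 < 2 * b)
    (hdiff : (y1 : ℤ) - (y2 : ℤ) = (b : ℤ) ∨ (y2 : ℤ) - (y1 : ℤ) = (b : ℤ))
    (SG : ℕ → ℕ → ℕ) (hSG : IsLengyelSG b 1 y1 1 y2 SG) :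
    (∀ x y : ℕ, SG x y =
      (if Odd x then 2 else 0) + (if b ≤ y % (2 * b) then 1 else 0)) ∧
    (∀ x y : ℕ, SG (x + 2) y = SG x y) := by
  have key := lengyel_formula b y1 y2 hb (by omega) SG hSG
  refine ⟨fun x y => key x y, fun x y => ?_⟩
  rw [key, key]
  have : Odd (x + 2) ↔ Odd x := by
    rw [Nat.odd_iff, Nat.odd_iff]; omega
  simp only [this]
end
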